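/- arXiv:2106.10913 — 9 statements merged into one kernel-verified Lean document; each statement's English description precedes it below -/
import Mathlib

section
/- Let A ∈ ℝ^{n×n} be symmetric positive definite and suppose the subdomains have the minimal overlap property with respect to A. Define the boolean sparsity matrix S(A) ∈ ℝ^{n×n} by S(A)_{ij} = 1 if A_{ij} ≠ 0 and S(A)_{ij} = 0 otherwise; define M_μ := Σ_{s=1}^N (R^s)^T R^s S(A) (R^s)^T R^s; define B ∈ ℝ^{n×n} by B_{ij} = A_{ij}/(M_μ)_{ij} if A_{ij} ≠ 0 and B_{ij} = 0 otherwise; and define B^s := R^s B (R^s)^T for each s. Then each B^s is symmetric and A = Σ_{s=1}^N (R^s)^T B^s R^s. -/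
open Matrix

/-- The boolean restriction matrix `R^s` whose rows are the canonical basis
vectors `e_i^T` for `i ∈ Ω`. -/
noncomputable def restrict {n : ℕ} (Ω : Finset (Fin n)) :
    Matrix {i : Fin n // i ∈ Ω} (Fin n) ℝ :=
  Matrix.of fun i j => if (i : Fin n) = j then 1 else 0

/-!
Left and right multiplication by `(R^s)ᵀ R^s` keeps the entries of a matrix indexed by
`Ω^s × Ω^s` and kills the others, so summing over `s` multiplies the `(i, j)` entry by the number
`μ i j` of subdomains containing both `i` and `j`. Hence `M_μ` equals `μ` on the sparsity pattern
of `A`, `B` is `A` divided entrywise by `μ`, and `∑ s, (R^s)ᵀ B^s R^s` multiplies `μ` back in.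
Minimal overlap says exactly that `μ` does not vanish on the sparsity pattern.
-/

section General

variable {ι σ : Type*}

/-- The minimal overlap property of a family of subdomains with respect to `A`: every nonzero
entry of `A` couples two indices lying in a common subdomain. -/
def HasMinimalOverlap {R : Type*} [Zero R] (Ω : σ → Finset ι) (A : Matrix ι ι R) : Prop :=
  ∀ i j, A i j ≠ 0 → ∃ s, i ∈ Ω s ∧ j ∈ Ω s

variable [DecidableEq ι]

/-- The restriction matrix of `restrict` for an arbitrary index type and coefficients in `R`,
given as the rows of the identity matrix indexed by `Ω`. -/
def restrictionMatrix (R : Type*) [Zero R] [One R] (Ω : Finset ι) :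
    Matrix {i : ι // i ∈ Ω} ι R :=
  (1 : Matrix ι ι R).submatrix (↑) id

theorem restrict_eq_restrictionMatrix {n : ℕ} (Ω : Finset (Fin n)) :
    restrict Ω = restrictionMatrix ℝ Ω :=
  rfl

/-- The multiplicity `μ i j` of a pair of indices: the number of subdomains containing both. It is
the value of `M_μ` at the nonzero entries of `A`. -/
def overlapCount [Fintype σ] (Ω : σ → Finset ι) (i j : ι) : ℕ :=
  (Finset.univ.filter fun s => i ∈ Ω s ∧ j ∈ Ω s).card

theorem overlapCount_comm [Fintype σ] (Ω : σ → Finset ι) (i j : ι) :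
    overlapCount Ω i j = overlapCount Ω j i := by
  simp only [overlapCount, and_comm]

theorem overlapCount_ne_zero_iff [Fintype σ] {Ω : σ → Finset ι} {i j : ι} :
    overlapCount Ω i j ≠ 0 ↔ ∃ s, i ∈ Ω s ∧ j ∈ Ω s := by
  simp [overlapCount, Finset.filter_eq_empty_iff]

section Semiring

variable {R : Type*} [NonAssocSemiring R]

theorem transpose_mul_restrictionMatrix (Ω : Finset ι) :
    (restrictionMatrix R Ω)ᵀ * restrictionMatrix R Ω =
      Matrix.diagonal fun i => if i ∈ Ω then 1 else 0 := by
  ext i j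
  calc ((restrictionMatrix R Ω)ᵀ * restrictionMatrix R Ω) i j
      = ∑ k ∈ Ω, (1 : Matrix ι ι R) k i * (1 : Matrix ι ι R) k j :=
        Finset.sum_coe_sort Ω fun k => (1 : Matrix ι ι R) k i * (1 : Matrix ι ι R) k j
    _ = Matrix.diagonal (fun i => if i ∈ Ω then 1 else 0) i j := by
        by_cases hij : i = j <;> simp [Matrix.one_apply, hij, eq_comm (a := j)]

variable [Fintype ι]

theorem restrictionMatrix_mul_mul_transpose (Ω : Finset ι) (X : Matrix ι ι R) :
    restrictionMatrix R Ω * X * (restrictionMatrix R Ω)ᵀ = X.submatrix (↑) (↑) := by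
  ext i j
  simp [restrictionMatrix, Matrix.mul_apply, Matrix.one_apply]

theorem sum_restrictionMatrix_sandwich_apply [Fintype σ] (Ω : σ → Finset ι) (X : Matrix ι ι R)
    (i j : ι) :
    (∑ s, (restrictionMatrix R (Ω s))ᵀ * restrictionMatrix R (Ω s) * X *
      ((restrictionMatrix R (Ω s))ᵀ * restrictionMatrix R (Ω s))) i j =
      X i j * overlapCount Ω i j := by
  have masked_entry (s : σ) :
      (if i ∈ Ω s then 1 else 0) * X i j * (if j ∈ Ω s then 1 else 0) =
        X i j * if i ∈ Ω s ∧ j ∈ Ω s then 1 else 0 := by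
    by_cases hi : i ∈ Ω s <;> simp [hi]
  simp only [transpose_mul_restrictionMatrix, Matrix.sum_apply, Matrix.mul_diagonal,
    Matrix.diagonal_mul, masked_entry, ← Finset.mul_sum, Finset.sum_boole, overlapCount]

end Semiring

section DivisionRing

variable {K : Type*} [DivisionRing K]

theorem isSymm_div_overlapCount [Fintype σ] (Ω : σ → Finset ι) {A : Matrix ι ι K}
    (hA : A.IsSymm) : (Matrix.of fun i j => A i j / (overlapCount Ω i j : K)).IsSymm := by
  ext i j
  simp only [Matrix.transpose_apply, Matrix.of_apply, hA.apply i j, overlapCount_comm Ω j i]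

theorem HasMinimalOverlap.div_mul_overlapCount [CharZero K] [Fintype σ] {Ω : σ → Finset ι}
    {A : Matrix ι ι K} (h : HasMinimalOverlap Ω A) (i j : ι) :
    A i j / overlapCount Ω i j * overlapCount Ω i j = A i j := by
  refine div_mul_cancel_of_imp fun hμ => ?_
  by_contra hij
  exact overlapCount_ne_zero_iff.mpr (h i j hij) (Nat.cast_eq_zero.mp hμ)

theorem stmt0_general [DecidableEq K] [CharZero K] [Fintype ι] [Fintype σ]
    {Ω : σ → Finset ι} {A : Matrix ι ι K} (hminov : HasMinimalOverlap Ω A)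
    {S : Matrix ι ι K} (hS : ∀ i j, S i j = if A i j ≠ 0 then 1 else 0)
    {Mμ : Matrix ι ι K}
    (hM : Mμ = ∑ s, (restrictionMatrix K (Ω s))ᵀ * restrictionMatrix K (Ω s) * S *
      ((restrictionMatrix K (Ω s))ᵀ * restrictionMatrix K (Ω s)))
    {B : Matrix ι ι K} (hB : ∀ i j, B i j = if A i j ≠ 0 then A i j / Mμ i j else 0)
    {Bs : (s : σ) → Matrix {i : ι // i ∈ Ω s} {i : ι // i ∈ Ω s} K}
    (hBs : ∀ s, Bs s = restrictionMatrix K (Ω s) * B * (restrictionMatrix K (Ω s))ᵀ) :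
    (A.IsSymm → ∀ s, (Bs s).IsSymm) ∧
      A = ∑ s, (restrictionMatrix K (Ω s))ᵀ * Bs s * restrictionMatrix K (Ω s) := by
  have hB_div : B = Matrix.of fun i j => A i j / (overlapCount Ω i j : K) := by
    ext i j
    rw [hB, hM, sum_restrictionMatrix_sandwich_apply, hS]
    by_cases hij : A i j = 0 <;> simp [hij]
  constructor
  · intro hA s
    rw [hBs, restrictionMatrix_mul_mul_transpose, hB_div]
    exact (isSymm_div_overlapCount Ω hA).submatrix _
  · ext i j
    calc A i j = B i j * overlapCount Ω i j := by
          rw [hB_div, Matrix.of_apply, hminov.div_mul_overlapCount]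
      _ = (∑ s, (restrictionMatrix K (Ω s))ᵀ * Bs s * restrictionMatrix K (Ω s)) i j := by
          simp only [← sum_restrictionMatrix_sandwich_apply, hBs, Matrix.mul_assoc]

end DivisionRing

end General

theorem stmt0 {n N : ℕ} (hn : 0 < n) (hN : 0 < N)
    (Ω : Fin N → Finset (Fin n))
    (hcover : ∀ i : Fin n, ∃ s, i ∈ Ω s)
    (A : Matrix (Fin n) (Fin n) ℝ) (hA : A.PosDef)
    (hminov : ∀ i j, A i j ≠ 0 → ∃ s, i ∈ Ω s ∧ j ∈ Ω s)
    (S : Matrix (Fin n) (Fin n) ℝ)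
    (hS : ∀ i j, S i j = if A i j ≠ 0 then 1 else 0)
    (Mμ : Matrix (Fin n) (Fin n) ℝ)
    (hM : Mμ = ∑ s, (restrict (Ω s))ᵀ * restrict (Ω s) * S *
      ((restrict (Ω s))ᵀ * restrict (Ω s)))
    (B : Matrix (Fin n) (Fin n) ℝ)
    (hB : ∀ i j, B i j = if A i j ≠ 0 then A i j / Mμ i j else 0)
    (Bs : (s : Fin N) → Matrix {i : Fin n // i ∈ Ω s} {i : Fin n // i ∈ Ω s} ℝ)
    (hBs : ∀ s, Bs s = restrict (Ω s) * B * (restrict (Ω s))ᵀ) :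
    (∀ s, (Bs s).IsSymm) ∧
      A = ∑ s, (restrict (Ω s))ᵀ * Bs s * restrict (Ω s) := by
  simp only [restrict_eq_restrictionMatrix] at hM hBs ⊢
  exact (stmt0_general hminov hS hM hB hBs).imp_left fun isSymm =>
    isSymm (Matrix.isHermitian_iff_isSymm.mp hA.isHermitian)
end

section
/- Let A ∈ ℝ^{n×n} be symmetric positive definite and let B^s ∈ ℝ^{n^s×n^s}, s = 1,…,N, be symmetric matrices with A = Σ_{s=1}^N (R^s)^T B^s R^s. For each s suppose B^s = A_+^s − A_-^s where A_+^s and A_-^s are symmetric positive semi-definite with A_+^s A_-^s = 0, and suppose A_+^s = V_+^s Λ_+^s (V_+^s)^T where V_+^s ∈ ℝ^{n^s×n_+^s} has orthonormal columns and Λ_+^s ∈ ℝ^{n_+^s×n_+^s} is diagonal positive definite (so that the Moore–Penrose pseudo-inverse of A_+^s equals V_+^s (Λ_+^s)^{-1} (V_+^s)^T). Let D := (Σ_{t=1}^N (R^t)^T R^t)^{-1} and D^s := R^s D (R^s)^T. Then the Neumann–Neumann-type preconditioner H^NN := Σ_{s=1}^N (R^s)^T D^s V_+^s (Λ_+^s)^{-1}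 (V_+^s)^T D^s R^s is symmetric positive definite. -/
open Matrix

/-!
Put `W s = (V s)ᴴ * R s`. Since `B s ≤ V s * L s * (V s)ᴴ` in the Loewner order, positive
definiteness of `∑ s, (R s)ᴴ * B s * R s` passes to `∑ s, (W s)ᴴ * L s * W s`, so the `W s` have no
common nonzero kernel vector. This last property no longer involves the `L s`, and it makes
`∑ s, (W s)ᴴ * C s * W s` positive definite for all positive definite `C s`. The weights
satisfy `Ds s * R s = R s * D`, since `D` and the `(R s)ᵀ * R s` are all diagonal and
`R s * (R s)ᵀ = 1`; hence the preconditioner is the congruence of such a sum by the invertible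
matrix `D`.
-/

section PosDef

variable {ι n α : Type*} {m k : ι → Type*} [Fintype ι] [∀ s, Fintype (m s)]
  [∀ s, Fintype (k s)] [Ring α] [PartialOrder α] [StarRing α]

lemma eq_zero_of_posDef_sum_conjTranspose_mul_mul [Fintype n]
    {W : ∀ s, Matrix (k s) n α} {L : ∀ s, Matrix (k s) (k s) α}
    (hL : (∑ s, (W s)ᴴ * L s * W s).PosDef) {x : n → α} (hx : ∀ s, W s *ᵥ x = 0) : x = 0 := by
  by_contra hne
  refine (hL.dotProduct_mulVec_pos hne).ne' ?_
  simp only [sum_mulVec, ← mulVec_mulVec, hx, mulVec_zero, Finset.sum_const_zero, dotProduct_zero]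

variable [IsOrderedAddMonoid α]

lemma posDef_sum_conjTranspose_mul_mul [Fintype n]
    {W : ∀ s, Matrix (k s) n α} {C : ∀ s, Matrix (k s) (k s) α} (hC : ∀ s, (C s).PosDef)
    (hW : ∀ x : n → α, (∀ s, W s *ᵥ x = 0) → x = 0) :
    (∑ s, (W s)ᴴ * C s * W s).PosDef := by
  have hsemi s : ((W s)ᴴ * C s * W s).PosSemidef := (hC s).posSemidef.conjTranspose_mul_mul_same _
  refine .of_dotProduct_mulVec_pos (posSemidef_sum _ fun s _ => hsemi s).isHermitian fun x hx => ?_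
  obtain ⟨t, ht⟩ : ∃ t, W t *ᵥ x ≠ 0 := by
    by_contra! hker
    exact hx (hW x hker)
  have hpos : 0 < star x ⬝ᵥ (((W t)ᴴ * C t * W t) *ᵥ x) := by
    simpa only [star_mulVec, dotProduct_mulVec, vecMul_vecMul] using (hC t).dotProduct_mulVec_pos ht
  rw [sum_mulVec, dotProduct_sum]
  exact Finset.sum_pos' (fun s _ => (hsemi s).dotProduct_mulVec_nonneg x)
    ⟨t, Finset.mem_univ t, hpos⟩

lemma posDef_sum_conjTranspose_mul_mul_mono [Finite n]
    {R : ∀ s, Matrix (m s) n α} {B P : ∀ s, Matrix (m s) (m s) α}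
    (hB : (∑ s, (R s)ᴴ * B s * R s).PosDef) (hBP : ∀ s, (P s - B s).PosSemidef) :
    (∑ s, (R s)ᴴ * P s * R s).PosDef := by
  have hdiff : (∑ s, (R s)ᴴ * (P s - B s) * R s).PosSemidef :=
    posSemidef_sum _ fun s _ => (hBP s).conjTranspose_mul_mul_same _
  simpa only [← Finset.sum_add_distrib, ← Matrix.add_mul, ← Matrix.mul_add, add_sub_cancel]
    using hB.add_posSemidef hdiff

theorem stmt4_general [Fintype n]
    {R : ∀ s, Matrix (m s) n α} {B : ∀ s, Matrix (m s) (m s) α} {V : ∀ s, Matrix (m s) (k s) α}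
    {L C : ∀ s, Matrix (k s) (k s) α} {D : Matrix n n α} {Ds : ∀ s, Matrix (m s) (m s) α}
    (hB : (∑ s, (R s)ᴴ * B s * R s).PosDef)
    (hBV : ∀ s, (V s * L s * (V s)ᴴ - B s).PosSemidef)
    (hC : ∀ s, (C s).PosDef)
    (hD : Function.Injective D.mulVec) (hDs : ∀ s, Ds s * R s = R s * D) :
    (∑ s, (R s)ᴴ * (Ds s)ᴴ * V s * C s * (V s)ᴴ * Ds s * R s).PosDef := by
  let W s := (V s)ᴴ * R s
  have hL : (∑ s, (W s)ᴴ * L s * W s).PosDef := by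
    simpa only [W, conjTranspose_mul, conjTranspose_conjTranspose, Matrix.mul_assoc]
      using posDef_sum_conjTranspose_mul_mul_mono hB hBV
  have hCW : (∑ s, (W s)ᴴ * C s * W s).PosDef :=
    posDef_sum_conjTranspose_mul_mul hC fun _ => eq_zero_of_posDef_sum_conjTranspose_mul_mul hL
  have hcongr s : (R s)ᴴ * (Ds s)ᴴ * V s * C s * (V s)ᴴ * Ds s * R s =
      Dᴴ * ((W s)ᴴ * C s * W s) * D := by
    rw [← conjTranspose_mul, Matrix.mul_assoc _ (Ds s), hDs]
    simp only [W, conjTranspose_mul, conjTranspose_conjTranspose, Matrix.mul_assoc]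
  simpa only [hcongr, ← Matrix.mul_sum, ← Matrix.sum_mul] using hCW.conjTranspose_mul_mul_same hD

end PosDef

section Restrict

variable {n : ℕ}

lemma restrict_mul_transpose_restrict (Ω : Finset (Fin n)) : restrict Ω * (restrict Ω)ᵀ = 1 := by
  ext i j
  rcases eq_or_ne i j with rfl | hij
  · simp [restrict, mul_apply]
  · simp [restrict, mul_apply, hij]

lemma transpose_restrict_mul_restrict (Ω : Finset (Fin n)) :
    (restrict Ω)ᵀ * restrict Ω = diagonal fun i => if i ∈ Ω then 1 else 0 := by
  ext i j
  simp only [restrict, mul_apply, transpose_apply, of_apply, diagonal_apply]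
  rw [Finset.sum_coe_sort Ω fun l => (if l = i then (1 : ℝ) else 0) * if l = j then 1 else 0]
  rcases eq_or_ne i j with rfl | hij
  · simp
  · simp only [ite_mul, one_mul, zero_mul, Finset.sum_ite_eq', if_neg hij, ite_self]

lemma restrict_mul_diagonal_mul_transpose_mul_restrict (Ω : Finset (Fin n)) (w : Fin n → ℝ) :
    restrict Ω * diagonal w * (restrict Ω)ᵀ * restrict Ω = restrict Ω * diagonal w := by
  have hcomm : diagonal w * ((restrict Ω)ᵀ * restrict Ω) =
      (restrict Ω)ᵀ * restrict Ω * diagonal w := by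
    rw [transpose_restrict_mul_restrict]
    exact commute_diagonal _ _
  calc restrict Ω * diagonal w * (restrict Ω)ᵀ * restrict Ω
      = restrict Ω * (diagonal w * ((restrict Ω)ᵀ * restrict Ω)) := by simp only [Matrix.mul_assoc]
    _ = restrict Ω * (restrict Ω)ᵀ * (restrict Ω * diagonal w) := by
      rw [hcomm]; simp only [Matrix.mul_assoc]
    _ = restrict Ω * diagonal w := by rw [restrict_mul_transpose_restrict, Matrix.one_mul]

variable {ι : Type*} [Fintype ι]

lemma sum_transpose_restrict_mul_restrict (Ω : ι → Finset (Fin n)) :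
    ∑ t, (restrict (Ω t))ᵀ * restrict (Ω t) = diagonal fun i => ∑ t, if i ∈ Ω t then 1 else 0 := by
  simp only [transpose_restrict_mul_restrict]
  ext i j
  by_cases hij : i = j <;> simp [Matrix.sum_apply, hij]

lemma isUnit_sum_transpose_restrict_mul_restrict {Ω : ι → Finset (Fin n)}
    (hcover : ∀ i, ∃ s, i ∈ Ω s) : IsUnit (∑ t, (restrict (Ω t))ᵀ * restrict (Ω t)) := by
  rw [sum_transpose_restrict_mul_restrict, isUnit_diagonal, Pi.isUnit_iff]
  intro i
  obtain ⟨s, hs⟩ := hcover i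
  rw [isUnit_iff_ne_zero, Finset.sum_boole, Nat.cast_ne_zero]
  exact Finset.card_ne_zero_of_mem (Finset.mem_filter.2 ⟨Finset.mem_univ s, hs⟩)

lemma restrict_mul_inv_sum_mul_transpose_mul_restrict (Ω : ι → Finset (Fin n)) (s : ι) :
    restrict (Ω s) * (∑ t, (restrict (Ω t))ᵀ * restrict (Ω t))⁻¹ * (restrict (Ω s))ᵀ *
      restrict (Ω s) = restrict (Ω s) * (∑ t, (restrict (Ω t))ᵀ * restrict (Ω t))⁻¹ := by
  rw [sum_transpose_restrict_mul_restrict, inv_diagonal,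
    restrict_mul_diagonal_mul_transpose_mul_restrict]

lemma isSymm_restrict_mul_inv_sum_mul_transpose (Ω : ι → Finset (Fin n)) (s : ι) :
    (restrict (Ω s) * (∑ t, (restrict (Ω t))ᵀ * restrict (Ω t))⁻¹ * (restrict (Ω s))ᵀ).IsSymm := by
  simp only [IsSymm, transpose_mul, transpose_transpose, transpose_nonsing_inv, transpose_sum,
    Matrix.mul_assoc]

end Restrict

theorem stmt4 {n N : ℕ} (hn : 0 < n) (hN : 0 < N)
    (Ω : Fin N → Finset (Fin n))
    (hcover : ∀ i : Fin n, ∃ s, i ∈ Ω s)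
    (A : Matrix (Fin n) (Fin n) ℝ) (hA : A.PosDef)
    (Bs Ap Am : (s : Fin N) → Matrix {i : Fin n // i ∈ Ω s} {i : Fin n // i ∈ Ω s} ℝ)
    (hBsym : ∀ s, (Bs s).IsSymm)
    (hsplit : A = ∑ s, (restrict (Ω s))ᵀ * Bs s * restrict (Ω s))
    (hdiff : ∀ s, Bs s = Ap s - Am s)
    (hAp : ∀ s, (Ap s).PosSemidef)
    (hAm : ∀ s, (Am s).PosSemidef)
    (hApAm : ∀ s, Ap s * Am s = 0)
    (np : Fin N → ℕ)
    (V : (s : Fin N) → Matrix {i : Fin n // i ∈ Ω s} (Fin (np s)) ℝ)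
    (d : (s : Fin N) → Fin (np s) → ℝ)
    (hd : ∀ s k, 0 < d s k)
    (hVortho : ∀ s, (V s)ᵀ * V s = 1)
    (hApV : ∀ s, Ap s = V s * Matrix.diagonal (d s) * (V s)ᵀ)
    (D : Matrix (Fin n) (Fin n) ℝ)
    (hD : D = (∑ t, (restrict (Ω t))ᵀ * restrict (Ω t))⁻¹)
    (Ds : (s : Fin N) → Matrix {i : Fin n // i ∈ Ω s} {i : Fin n // i ∈ Ω s} ℝ)
    (hDs : ∀ s, Ds s = restrict (Ω s) * D * (restrict (Ω s))ᵀ) :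
    (∑ s, (restrict (Ω s))ᵀ * Ds s * V s * Matrix.diagonal (fun k => (d s k)⁻¹) *
      (V s)ᵀ * Ds s * restrict (Ω s)).PosDef := by
  obtain rfl : Ds = _ := funext hDs
  subst hD hsplit
  simpa only [conjTranspose_eq_transpose_of_trivial,
    (isSymm_restrict_mul_inv_sum_mul_transpose Ω _).eq] using
    stmt4_general (R := fun s => restrict (Ω s)) (L := fun s => diagonal (d s)) hA
      (fun s => by simpa [← hApV, hdiff] using hAm s)
      (fun s => .diagonal fun i => inv_pos.2 (hd s i))
      (mulVec_injective_of_isUnit <| isUnit_nonsing_inv_iff.2 <|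
        isUnit_sum_transpose_restrict_mul_restrict hcover)
      (restrict_mul_inv_sum_mul_transpose_mul_restrict Ω)
end

section
/- Let A ∈ ℝ^{n×n} be symmetric positive definite and let B^s ∈ ℝ^{n^s×n^s}, s = 1,…,N, be symmetric matrices with A = Σ_{s=1}^N (R^s)^T B^s R^s. For each s suppose B^s = A_+^s − A_-^s where A_+^s and A_-^s are symmetric positive semi-definite with A_+^s A_-^s = 0. Define A_+ := Σ_{s=1}^N (R^s)^T A_+^s R^s and A_- := Σ_{s=1}^N (R^s)^T A_-^s R^s. Then the rank of A_- satisfies rank(A_-) ≤ (Σ_{s=1}^N n^s) − n. -/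
open Matrix

/- Summing the splittings gives `A₊ = A + A₋` with both summands positive semidefinite, so
`rank A ≤ rank A₊`. Locally `A₊ˢ A₋ˢ = 0` forces `rank A₊ˢ + rank A₋ˢ ≤ nˢ`, and summing over `s`
bounds `rank A₊ + rank A₋` by `∑ nˢ`. For positive definite `A` the rank of `A` is `n`. -/

section Rank

variable {K ι m n : Type*} [Field K]

theorem rank_sum_le [Fintype n] (s : Finset ι) (M : ι → Matrix m n K) :
    (∑ i ∈ s, M i).rank ≤ ∑ i ∈ s, (M i).rank := by
  have h := LinearMap.rank_finsetSum_le s fun i => (M i).mulVecLin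
  rw [← map_sum (Matrix.mulVecBilin K K) M s] at h
  simp only [LinearMap.rank, ← Module.finrank_eq_rank] at h
  exact_mod_cast h

variable {l : ι → Type*} [Fintype ι] [∀ i, Fintype (l i)] [Fintype n]

theorem rank_sum_mul_mul_le (P : ∀ i, Matrix m (l i) K) (M : ∀ i, Matrix (l i) (l i) K)
    (Q : ∀ i, Matrix (l i) n K) :
    (∑ i, P i * M i * Q i).rank ≤ ∑ i, (M i).rank :=
  (rank_sum_le _ _).trans <| Finset.sum_le_sum fun _ _ =>
    (rank_mul_le_left _ _).trans (rank_mul_le_right _ _)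

theorem rank_sum_mul_mul_add_rank_sum_mul_mul_le_card (P : ∀ i, Matrix m (l i) K)
    {M M' : ∀ i, Matrix (l i) (l i) K} (Q : ∀ i, Matrix (l i) n K) (h : ∀ i, M i * M' i = 0) :
    (∑ i, P i * M i * Q i).rank + (∑ i, P i * M' i * Q i).rank ≤ ∑ i, Fintype.card (l i) :=
  calc
    _ ≤ ∑ i, (M i).rank + ∑ i, (M' i).rank :=
      add_le_add (rank_sum_mul_mul_le P M Q) (rank_sum_mul_mul_le P M' Q)
    _ = ∑ i, ((M i).rank + (M' i).rank) := Finset.sum_add_distrib.symm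
    _ ≤ ∑ i, Fintype.card (l i) :=
      Finset.sum_le_sum fun i _ => rank_add_rank_le_card_of_mul_eq_zero (h i)

end Rank

theorem rank_le_rank_of_ker_mulVecLin_le {K m m' n : Type*} [Field K] [Fintype n]
    {A : Matrix m n K} {B : Matrix m' n K}
    (h : LinearMap.ker B.mulVecLin ≤ LinearMap.ker A.mulVecLin) : A.rank ≤ B.rank := by
  have hker := Submodule.finrank_mono h
  have hA : A.rank + _ = _ := A.mulVecLin.finrank_range_add_finrank_ker
  have hB : B.rank + _ = _ := B.mulVecLin.finrank_range_add_finrank_ker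
  omega

section PosSemidef

open scoped ComplexOrder

variable {𝕜 n : Type*} [RCLike 𝕜] [Fintype n] {A B : Matrix n n 𝕜}

theorem ker_mulVecLin_add_le_of_posSemidef (hA : A.PosSemidef) (hB : B.PosSemidef) :
    LinearMap.ker (A + B).mulVecLin ≤ LinearMap.ker A.mulVecLin := by
  intro x hx
  rw [LinearMap.mem_ker, mulVecLin_apply] at hx ⊢
  have hsum : star x ⬝ᵥ A *ᵥ x + star x ⬝ᵥ B *ᵥ x = 0 := by
    rw [← dotProduct_add, ← add_mulVec, hx, dotProduct_zero]
  rw [← hA.dotProduct_mulVec_zero_iff]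
  exact ((add_eq_zero_iff_of_nonneg (hA.dotProduct_mulVec_nonneg x)
    (hB.dotProduct_mulVec_nonneg x)).mp hsum).1

theorem rank_le_rank_add_of_posSemidef (hA : A.PosSemidef) (hB : B.PosSemidef) :
    A.rank ≤ (A + B).rank :=
  rank_le_rank_of_ker_mulVecLin_le (ker_mulVecLin_add_le_of_posSemidef hA hB)

theorem stmt5_general {ι : Type*} [Fintype ι] {m : ι → Type*} [∀ s, Fintype (m s)]
    (R : ∀ s, Matrix (m s) n 𝕜) (hA : A.PosSemidef) {Ap Am : ∀ s, Matrix (m s) (m s) 𝕜}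
    (hsplit : A = ∑ s, (R s)ᴴ * (Ap s - Am s) * R s)
    (hAm : ∀ s, (Am s).PosSemidef) (hApAm : ∀ s, Ap s * Am s = 0) :
    A.rank + (∑ s, (R s)ᴴ * Am s * R s).rank ≤ ∑ s, Fintype.card (m s) := by
  have hAminus : (∑ s, (R s)ᴴ * Am s * R s).PosSemidef :=
    posSemidef_sum _ fun s _ => (hAm s).conjTranspose_mul_mul_same (R s)
  have hAplus : A + ∑ s, (R s)ᴴ * Am s * R s = ∑ s, (R s)ᴴ * Ap s * R s := by
    simp only [hsplit, Matrix.mul_sub, Matrix.sub_mul, Finset.sum_sub_distrib, sub_add_cancel]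
  calc
    _ ≤ (∑ s, (R s)ᴴ * Ap s * R s).rank + (∑ s, (R s)ᴴ * Am s * R s).rank := by
      rw [← hAplus]
      gcongr
      exact rank_le_rank_add_of_posSemidef hA hAminus
    _ ≤ ∑ s, Fintype.card (m s) :=
      rank_sum_mul_mul_add_rank_sum_mul_mul_le_card (fun s => (R s)ᴴ) R hApAm

end PosSemidef

theorem stmt5 {n N : ℕ} (hn : 0 < n) (hN : 0 < N)
    (Ω : Fin N → Finset (Fin n))
    (hcover : ∀ i : Fin n, ∃ s, i ∈ Ω s)
    (A : Matrix (Fin n) (Fin n) ℝ) (hA : A.PosDef)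
    (Bs Ap Am : (s : Fin N) → Matrix {i : Fin n // i ∈ Ω s} {i : Fin n // i ∈ Ω s} ℝ)
    (hBsym : ∀ s, (Bs s).IsSymm)
    (hsplit : A = ∑ s, (restrict (Ω s))ᵀ * Bs s * restrict (Ω s))
    (hdiff : ∀ s, Bs s = Ap s - Am s)
    (hAp : ∀ s, (Ap s).PosSemidef)
    (hAm : ∀ s, (Am s).PosSemidef)
    (hApAm : ∀ s, Ap s * Am s = 0)
    (Aplus Aminus : Matrix (Fin n) (Fin n) ℝ)
    (hAplus : Aplus = ∑ s, (restrict (Ω s))ᵀ * Ap s * restrict (Ω s))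
    (hAminus : Aminus = ∑ s, (restrict (Ω s))ᵀ * Am s * restrict (Ω s)) :
    Aminus.rank ≤ (∑ s, (Ω s).card) - n := by
  simp only [hdiff, ← conjTranspose_eq_transpose_of_trivial] at hsplit hAminus
  apply Nat.le_sub_of_add_le'
  simpa [hAminus, rank_of_isUnit A hA.isUnit] using
    stmt5_general (fun s => restrict (Ω s)) hA.posSemidef hsplit hAm hApAm
end

section
/- Let A_+ ∈ ℝ^{n×n} be symmetric positive definite, let Λ_- ∈ ℝ^{n_-×n_-} be diagonal positive definite, let V_- ∈ ℝ^{n×n_-}, and suppose A := A_+ − V_- Λ_- (V_-)^T is symmetric positive definite. Then the matrix Λ_-^{-1} − (V_-)^T A_+^{-1} V_- ∈ ℝ^{n_-×n_-} is invertible. -/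
open Matrix

/-!
Both `C⁻¹ - V * A⁻¹ * U` and `A - U * C * V` are Schur complements of the block matrix
`fromBlocks A U V C⁻¹`, relative to its invertible diagonal blocks `A` and `C⁻¹`. Each of them is
therefore invertible exactly when the block matrix is.
-/

section SchurComplement

variable {m n R : Type*} [Fintype m] [Fintype n] [DecidableEq m] [DecidableEq n] [CommRing R]

theorem isUnit_sub_mul_inv_mul_comm {A : Matrix m m R} {D : Matrix n n R}
    (hA : IsUnit A) (hD : IsUnit D) (B : Matrix m n R) (C : Matrix n m R) :
    IsUnit (D - C * A⁻¹ * B) ↔ IsUnit (A - B * D⁻¹ * C) := by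
  let := hA.invertible
  let := hD.invertible
  calc IsUnit (D - C * A⁻¹ * B)
      ↔ IsUnit (fromBlocks A B C D) := by
        rw [isUnit_fromBlocks_iff_of_invertible₁₁, invOf_eq_nonsing_inv]
    _ ↔ IsUnit (A - B * D⁻¹ * C) := by
        rw [isUnit_fromBlocks_iff_of_invertible₂₂, invOf_eq_nonsing_inv]

theorem stmt6_general {A : Matrix m m R} {C : Matrix n n R}
    (hA : IsUnit A) (hC : IsUnit C) (U : Matrix m n R) (V : Matrix n m R) :
    IsUnit (C⁻¹ - V * A⁻¹ * U) ↔ IsUnit (A - U * C * V) := by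
  have hC_inv : IsUnit C⁻¹ := isUnit_nonsing_inv_iff.mpr hC
  have hC_inv_inv : C⁻¹⁻¹ = C := nonsing_inv_nonsing_inv C ((isUnit_iff_isUnit_det C).mp hC)
  rw [isUnit_sub_mul_inv_mul_comm hA hC_inv, hC_inv_inv]

end SchurComplement

theorem stmt6 {n nm : ℕ} (hn : 0 < n) (hnm : 0 < nm) (hle : nm ≤ n)
    (Aplus : Matrix (Fin n) (Fin n) ℝ) (hAplus : Aplus.PosDef)
    (d : Fin nm → ℝ) (hd : ∀ k, 0 < d k)
    (V : Matrix (Fin n) (Fin nm) ℝ)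
    (A : Matrix (Fin n) (Fin n) ℝ)
    (hA : A = Aplus - V * Matrix.diagonal d * Vᵀ)
    (hApos : A.PosDef) :
    IsUnit ((Matrix.diagonal d)⁻¹ - Vᵀ * Aplus⁻¹ * V) :=
  (stmt6_general hAplus.isUnit (PosDef.diagonal hd).isUnit V Vᵀ).mpr (hA ▸ hApos.isUnit)
end

section
/- Let A_+ ∈ ℝ^{n×n} be symmetric positive definite, let Λ_- ∈ ℝ^{n_-×n_-} be diagonal positive definite, let V_- ∈ ℝ^{n×n_-}, and suppose A := A_+ − V_- Λ_- (V_-)^T is symmetric positive definite. Let H_2 ∈ ℝ^{n×n} be symmetric positive definite and let 0 < λ_min ≤ λ_max be such that every eigenvalue λ of H_2 A_+ (i.e., every λ ∈ ℝ for which there is x ≠ 0 with H_2 A_+ x = λ x) satisfies λ_min ≤ λ ≤ λ_max. Define the inexact AWG preconditioner H_{3,inex} := H_2 + A_+^{-1} V_- (Λ_-^{-1} − (V_-)^T A_+^{-1} V_-)^{-1} (V_-)^T A_+^{-1}. Then every eigenvalue λ of H_{3,inex} A satisfies min(1, λ_min) ≤ λ ≤ max(1, λ_max). -/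
/-!
By the Woodbury identity the correction term is `A⁻¹ - A₊⁻¹`, so that
`H₃ = H₂ + (A⁻¹ - A₊⁻¹)`. For positive definite `P`, the eigenvalues of `H * P` lie in `[a, b]`
exactly when `a • P⁻¹ ≤ H ≤ b • P⁻¹` in the Loewner order, because `P = Sᴴ * S` makes `H * P`
similar to the Hermitian matrix `S * H * Sᴴ`. Since `A ≤ A₊` gives `A₊⁻¹ ≤ A⁻¹`, the bounds
`a • A₊⁻¹ ≤ H₂ ≤ b • A₊⁻¹` imply
`min 1 a • A⁻¹ ≤ H₂ + (A⁻¹ - A₊⁻¹) ≤ max 1 b • A⁻¹`.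
-/

open Matrix

section OrderedModule

variable {R E : Type*} [Ring R] [LinearOrder R] [IsOrderedRing R] [AddCommGroup E] [PartialOrder E]
  [IsOrderedAddMonoid E] [Module R E] [IsOrderedModule R E] {a b : R} {h x y : E}

theorem min_one_smul_le_add_sub (hx : 0 ≤ x) (hxy : x ≤ y) (h_ge : a • x ≤ h) :
    min 1 a • y ≤ h + (y - x) := by
  have h_gap : min 1 a • (y - x) ≤ y - x :=
    smul_le_of_le_one_left (sub_nonneg.2 hxy) (min_le_left 1 a)
  calc
    min 1 a • y = min 1 a • x + min 1 a • (y - x) := by rw [← smul_add, add_sub_cancel]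
    _ ≤ a • x + (y - x) := add_le_add (smul_le_smul_of_nonneg_right (min_le_right 1 a) hx) h_gap
    _ ≤ h + (y - x) := by gcongr

theorem add_sub_le_max_one_smul (hx : 0 ≤ x) (hxy : x ≤ y) (h_le : h ≤ b • x) :
    h + (y - x) ≤ max 1 b • y := by
  have h_gap : y - x ≤ max 1 b • (y - x) :=
    le_smul_of_one_le_left (sub_nonneg.2 hxy) (le_max_left 1 b)
  calc
    h + (y - x) ≤ b • x + (y - x) := by gcongr
    _ ≤ max 1 b • x + max 1 b • (y - x) :=
      add_le_add (smul_le_smul_of_nonneg_right (le_max_right 1 b) hx) h_gap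
    _ = max 1 b • y := by rw [← smul_add, add_sub_cancel]

end OrderedModule

section Woodbury

variable {m n R : Type*} [Fintype m] [Fintype n] [DecidableEq m] [DecidableEq n] [CommRing R]

theorem isUnit_inv_add_mul_inv_mul_iff {A : Matrix n n R} {C : Matrix m m R} (hA : IsUnit A)
    (hC : IsUnit C) (U : Matrix n m R) (V : Matrix m n R) :
    IsUnit (C⁻¹ + V * A⁻¹ * U) ↔ IsUnit (A + U * C * V) := by
  cases hA.nonempty_invertible
  cases hC.nonempty_invertible
  have schur_A := isUnit_fromBlocks_iff_of_invertible₁₁ (A := A) (B := U) (C := -V) (D := ⅟C)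
  have schur_C := isUnit_fromBlocks_iff_of_invertible₂₂ (A := A) (B := U) (C := -V) (D := ⅟C)
  simpa [invOf_eq_nonsing_inv] using schur_A.symm.trans schur_C

theorem sub_mul_mul_inv_eq_add {A : Matrix n n R} {C : Matrix m m R} {U : Matrix n m R}
    {V : Matrix m n R} (hA : IsUnit A) (hC : IsUnit C) (h : IsUnit (A - U * C * V)) :
    (A - U * C * V)⁻¹ = A⁻¹ + A⁻¹ * U * (C⁻¹ - V * A⁻¹ * U)⁻¹ * V * A⁻¹ := by
  have h_unit : IsUnit (C⁻¹ + V * A⁻¹ * (-U)) := by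
    rw [isUnit_inv_add_mul_inv_mul_iff hA hC]
    simpa [sub_eq_add_neg] using h
  simpa [sub_eq_add_neg] using add_mul_mul_inv_eq_sub A (-U) C V hA hC h_unit

end Woodbury

theorem spectrum_subset_iff_forall_mulVec_eq_smul {n K : Type*} [Fintype n] [DecidableEq n]
    [Field K] {M : Matrix n n K} {s : Set K} :
    spectrum K M ⊆ s ↔ ∀ (μ : K) (x : n → K), x ≠ 0 → M *ᵥ x = μ • x → μ ∈ s := by
  refine ⟨fun h μ x hx hMx => h ?_, fun h μ hμ => ?_⟩
  · rw [← spectrum_toLin']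
    exact (Module.End.hasEigenvalue_of_hasEigenvector
      (Module.End.hasEigenvector_iff.2 ⟨Module.End.mem_eigenspace_iff.2 hMx, hx⟩)).mem_spectrum
  · rw [← spectrum_toLin', ← Module.End.hasEigenvalue_iff_mem_spectrum] at hμ
    obtain ⟨x, hx⟩ := hμ.exists_hasEigenvector
    exact h μ x hx.2 hx.apply_eq_smul

section Loewner

open scoped MatrixOrder ComplexOrder

variable {m n 𝕜 : Type*} [RCLike 𝕜] {A H P : Matrix n n 𝕜} {a b : ℝ}

theorem posDef_of_posDef_of_le (hA : A.PosDef) (hAP : A ≤ P) : P.PosDef := by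
  simpa using hA.add_posSemidef (le_iff.1 hAP)

variable [Fintype m] [Fintype n] [DecidableEq m] [DecidableEq n]

theorem inv_le_inv_of_posDef_of_le (hA : A.PosDef) (hAP : A ≤ P) : P⁻¹ ≤ A⁻¹ := by
  have hP : P.PosDef := posDef_of_posDef_of_le hA hAP
  have := hA.inv.isUnit.invertible
  have := hP.isUnit.invertible
  -- `P - A` and `A⁻¹ - P⁻¹` are the two Schur complements of the block matrix `[P, 1; 1, A⁻¹]`.
  have schur_P := PosDef.fromBlocks₁₁ (1 : Matrix n n 𝕜) A⁻¹ hP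
  have schur_A := PosDef.fromBlocks₂₂ P (1 : Matrix n n 𝕜) hA.inv
  have hAA : A⁻¹⁻¹ = A := nonsing_inv_nonsing_inv A ((isUnit_iff_isUnit_det A).1 hA.isUnit)
  simp only [conjTranspose_one, Matrix.one_mul, Matrix.mul_one, hAA] at schur_P schur_A
  exact schur_P.1 (schur_A.2 hAP)

theorem posSemidef_iff_spectrum_mul_subset (hP : P.PosDef) (hH : H.IsHermitian) :
    H.PosSemidef ↔ spectrum 𝕜 (H * P) ⊆ {μ | 0 ≤ μ} := by
  obtain ⟨S, hS, rfl⟩ :=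
    CStarAlgebra.isStrictlyPositive_iff_eq_star_mul_self.1 hP.isStrictlyPositive
  obtain ⟨S, rfl⟩ := hS
  have h_similar : spectrum 𝕜 (S * H * star (S : Matrix n n 𝕜)) =
      spectrum 𝕜 (H * (star (S : Matrix n n 𝕜) * S)) := calc
    _ = spectrum 𝕜 (S * (H * (star (S : Matrix n n 𝕜) * S)) * (S⁻¹ : (Matrix n n 𝕜)ˣ)) := by
      simp only [mul_assoc, Units.mul_inv, mul_one]
    _ = _ := spectrum.units_conjugate
  have h_herm : (S * H * star (S : Matrix n n 𝕜)).IsHermitian :=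
    isHermitian_mul_mul_conjTranspose _ hH
  rw [← S.isUnit.posSemidef_star_right_conjugate_iff,
    posSemidef_iff_isHermitian_and_spectrum_nonneg, h_similar, and_iff_right h_herm]

-- In the order on `𝕜`, the interval between two real scalars consists of real scalars, so the
-- inclusion also says that the spectrum is real.
theorem spectrum_mul_subset_Icc_iff (hP : P.PosDef) (hH : H.IsHermitian) :
    spectrum 𝕜 (H * P) ⊆ Set.Icc (a : 𝕜) b ↔ a • P⁻¹ ≤ H ∧ H ≤ b • P⁻¹ := by
  have h_inv : P⁻¹ * P = 1 := nonsing_inv_mul P ((isUnit_iff_isUnit_det P).1 hP.isUnit)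
  have h_smul (r : ℝ) : r • P⁻¹ * P = algebraMap 𝕜 (Matrix n n 𝕜) r := by
    rw [smul_mul_assoc, h_inv, Algebra.algebraMap_eq_smul_one,
      RCLike.real_smul_eq_coe_smul (K := 𝕜)]
  have h_herm (r : ℝ) : (r • P⁻¹).IsHermitian := hP.inv.isHermitian.smul (.all r)
  rw [le_iff, le_iff, posSemidef_iff_spectrum_mul_subset hP (hH.sub (h_herm a)),
    posSemidef_iff_spectrum_mul_subset hP ((h_herm b).sub hH), sub_mul, sub_mul, h_smul, h_smul,
    ← spectrum.sub_singleton_eq, ← spectrum.singleton_sub_eq]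
  simp [Set.subset_def, forall_and]

theorem spectrum_add_inv_sub_inv_mul_subset_Icc (hA : A.PosDef) (hAP : A ≤ P)
    (hH : H.IsHermitian) (hspec : spectrum 𝕜 (H * P) ⊆ Set.Icc (a : 𝕜) b) :
    spectrum 𝕜 ((H + (A⁻¹ - P⁻¹)) * A) ⊆ Set.Icc ((min 1 a : ℝ) : 𝕜) ((max 1 b : ℝ) : 𝕜) := by
  have hP : P.PosDef := posDef_of_posDef_of_le hA hAP
  have h_inv_le : P⁻¹ ≤ A⁻¹ := inv_le_inv_of_posDef_of_le hA hAP
  have h_inv_nonneg : 0 ≤ P⁻¹ := hP.inv.posSemidef.nonneg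
  obtain ⟨h_ge, h_le⟩ := (spectrum_mul_subset_Icc_iff hP hH).1 hspec
  rw [spectrum_mul_subset_Icc_iff hA (hH.add (hA.inv.isHermitian.sub hP.inv.isHermitian))]
  exact ⟨min_one_smul_le_add_sub h_inv_nonneg h_inv_le h_ge,
    add_sub_le_max_one_smul h_inv_nonneg h_inv_le h_le⟩

theorem stmt8_general {Lam : Matrix m m 𝕜} {V : Matrix n m 𝕜} {Aplus H2 H3 : Matrix n n 𝕜}
    {lmin lmax : ℝ} (hAplus : Aplus.PosDef) (hLam : Lam.PosDef) (hA : A = Aplus - V * Lam * Vᴴ)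
    (hApos : A.PosDef) (hH2 : H2.IsHermitian)
    (hspec : spectrum 𝕜 (H2 * Aplus) ⊆ Set.Icc (lmin : 𝕜) lmax)
    (hH3 : H3 = H2 + Aplus⁻¹ * V * (Lam⁻¹ - Vᴴ * Aplus⁻¹ * V)⁻¹ * Vᴴ * Aplus⁻¹) :
    spectrum 𝕜 (H3 * A) ⊆ Set.Icc ((min 1 lmin : ℝ) : 𝕜) ((max 1 lmax : ℝ) : 𝕜) := by
  have h_le : A ≤ Aplus := by
    simpa [hA, le_iff] using hLam.posSemidef.mul_mul_conjTranspose_same V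
  have h_woodbury : H3 = H2 + (A⁻¹ - Aplus⁻¹) := by
    rw [hH3, hA, sub_mul_mul_inv_eq_add hAplus.isUnit hLam.isUnit (hA ▸ hApos.isUnit),
      add_sub_cancel_left]
  rw [h_woodbury]
  exact spectrum_add_inv_sub_inv_mul_subset_Icc hApos h_le hH2 hspec

end Loewner

theorem stmt8 {n nm : ℕ} (hn : 0 < n) (hnm : 0 < nm) (hle : nm ≤ n)
    (Aplus : Matrix (Fin n) (Fin n) ℝ) (hAplus : Aplus.PosDef)
    (d : Fin nm → ℝ) (hd : ∀ k, 0 < d k)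
    (V : Matrix (Fin n) (Fin nm) ℝ)
    (A : Matrix (Fin n) (Fin n) ℝ)
    (hA : A = Aplus - V * Matrix.diagonal d * Vᵀ)
    (hApos : A.PosDef)
    (H2 : Matrix (Fin n) (Fin n) ℝ) (hH2 : H2.PosDef)
    (lmin lmax : ℝ) (hlmin : 0 < lmin) (hlml : lmin ≤ lmax)
    (hspec : ∀ (lam : ℝ) (x : Fin n → ℝ), x ≠ 0 →
      (H2 * Aplus) *ᵥ x = lam • x → lmin ≤ lam ∧ lam ≤ lmax)
    (H3 : Matrix (Fin n) (Fin n) ℝ)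
    (hH3 : H3 = H2 +
      Aplus⁻¹ * V * ((Matrix.diagonal d)⁻¹ - Vᵀ * Aplus⁻¹ * V)⁻¹ * Vᵀ * Aplus⁻¹) :
    ∀ (lam : ℝ) (x : Fin n → ℝ), x ≠ 0 → (H3 * A) *ᵥ x = lam • x →
      min 1 lmin ≤ lam ∧ lam ≤ max 1 lmax := by
  have h_spectrum : spectrum ℝ (H2 * Aplus) ⊆ Set.Icc lmin lmax :=
    spectrum_subset_iff_forall_mulVec_eq_smul.2 hspec
  exact spectrum_subset_iff_forall_mulVec_eq_smul.1 <|
    stmt8_general hAplus (posDef_diagonal_iff.2 hd) hA hApos hH2.isHermitian h_spectrum hH3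
end

section
/- Let A_+ ∈ ℝ^{n×n} be symmetric positive definite, let Λ_- ∈ ℝ^{n_-×n_-} be diagonal positive definite, let V_- ∈ ℝ^{n×n_-}, and suppose A := A_+ − V_- Λ_- (V_-)^T is symmetric positive definite. Then range(A_+^{-1} V_-) = range(A^{-1} V_-), where range(M) denotes the column space of a matrix M. -/
open Matrix

/-!
If two invertible matrices `A` and `B` satisfy `A - B = V * W`, the resolvent identity
`B⁻¹ - A⁻¹ = B⁻¹ * (A - B) * A⁻¹` turns `A⁻¹ * V` into `B⁻¹ * V` times a matrix on the right, so
the column space of `A⁻¹ * V` lies in that of `B⁻¹ * V`. Exchanging `A` and `B` only replaces `W`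
by `-W`, which gives the reverse inclusion.
-/

section LowRankUpdate

variable {m n R : Type*} [Fintype m] [Fintype n] [DecidableEq n] [CommRing R]
  {A B : Matrix n n R} {V : Matrix n m R} {W : Matrix m n R}

theorem inv_mul_eq_inv_mul_mul_one_sub [DecidableEq m] (hAB : IsUnit A ↔ IsUnit B)
    (hsub : A - B = V * W) : A⁻¹ * V = B⁻¹ * V * (1 - W * A⁻¹ * V) := by
  have resolvent : B⁻¹ - A⁻¹ = B⁻¹ * (V * W) * A⁻¹ := by
    rw [Matrix.inv_sub_inv hAB.symm, hsub]
  calc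
    A⁻¹ * V = B⁻¹ * V - (B⁻¹ - A⁻¹) * V := by rw [Matrix.sub_mul, sub_sub_cancel]
    _ = B⁻¹ * V - B⁻¹ * (V * W) * A⁻¹ * V := by rw [resolvent]
    _ = B⁻¹ * V * (1 - W * A⁻¹ * V) := by
      simp only [Matrix.mul_sub, Matrix.mul_one, Matrix.mul_assoc]

theorem range_mulVecLin_inv_mul_le (hAB : IsUnit A ↔ IsUnit B) (hsub : A - B = V * W) :
    LinearMap.range (A⁻¹ * V).mulVecLin ≤ LinearMap.range (B⁻¹ * V).mulVecLin := by
  classical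
  rw [inv_mul_eq_inv_mul_mul_one_sub hAB hsub, Matrix.mulVecLin_mul]
  exact LinearMap.range_comp_le_range _ _

theorem stmt9_general (hA : IsUnit A) (hB : IsUnit B) (hBA : B = A - V * W) :
    LinearMap.range (A⁻¹ * V).mulVecLin = LinearMap.range (B⁻¹ * V).mulVecLin := by
  have hsub : A - B = V * W := by rw [hBA, sub_sub_cancel]
  have hsub' : B - A = V * -W := by rw [Matrix.mul_neg, ← hsub, neg_sub]
  exact le_antisymm (range_mulVecLin_inv_mul_le (iff_of_true hA hB) hsub)
    (range_mulVecLin_inv_mul_le (iff_of_true hB hA) hsub')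

end LowRankUpdate

theorem stmt9 {n nm : ℕ} (hn : 0 < n) (hnm : 0 < nm) (hle : nm ≤ n)
    (Aplus : Matrix (Fin n) (Fin n) ℝ) (hAplus : Aplus.PosDef)
    (d : Fin nm → ℝ) (hd : ∀ k, 0 < d k)
    (V : Matrix (Fin n) (Fin nm) ℝ)
    (A : Matrix (Fin n) (Fin n) ℝ)
    (hA : A = Aplus - V * Matrix.diagonal d * Vᵀ)
    (hApos : A.PosDef) :
    LinearMap.range (Aplus⁻¹ * V).mulVecLin = LinearMap.range (A⁻¹ * V).mulVecLin :=
  stmt9_general hAplus.isUnit hApos.isUnit (by rw [hA, Matrix.mul_assoc])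
end

section
/- Let A_+ ∈ ℝ^{n×n} be symmetric positive definite, let Λ_- ∈ ℝ^{n_-×n_-} be diagonal positive definite, let V_- ∈ ℝ^{n×n_-} have orthonormal columns ((V_-)^T V_- = I), set A_- := V_- Λ_- (V_-)^T, and suppose A := A_+ − A_- is symmetric positive definite. Let W ∈ ℝ^{n×n_-} satisfy range(W) = range(A_+^{-1} V_-), and define Π_3 := I − W (W^T A W)^{-1} W^T A. Then W^T A W is invertible, Π_3 is an A-orthogonal projection (Π_3² = Π_3 and (Π_3)^T A = A Π_3), and its kernel and range satisfy Ker(Π_3) = range(A^{-1} V_-) and range(Π_3) = Ker(A_-). -/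
open Matrix

/-!
For any `W` of full column rank, `1 - W (Wᵀ A W)⁻¹ Wᵀ A` is the `A`-orthogonal projection with
kernel `range W`; its range is the `A`-orthogonal complement of `range W`. What is specific here is
that `A` and `A₊` differ by a matrix of the form `V K`: since `A A₊⁻¹ V = V (1 - K A₊⁻¹ V)`, the
range of `A₊⁻¹ V` does not change when `A₊` is replaced by `A`. Hence `range W = range (A⁻¹ V)`,
and the `A`-orthogonal complement of this space is `Ker Vᵀ = Ker A₋`.
-/

section LinearMap

variable {R M N : Type*} [Semiring R] [OrzechProperty R] [AddCommMonoid M] [Module R M]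
  [Module.Finite R M] [AddCommMonoid N] [Module R N]

theorem injective_of_range_eq_range {f g : M →ₗ[R] N} (h : LinearMap.range f = LinearMap.range g)
    (hg : Function.Injective g) : Function.Injective f := by
  let f' : M →ₗ[R] LinearMap.range g :=
    f.codRestrict (LinearMap.range g) fun x ↦ h ▸ LinearMap.mem_range_self f x
  have hf' : Function.Surjective f' := by
    rintro ⟨y, hy⟩
    obtain ⟨x, hx⟩ := h.ge hy
    exact ⟨x, Subtype.ext hx⟩
  have hinj : Function.Injective f' :=
    OrzechProperty.injective_of_surjective_of_injective g.rangeRestrict f'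
      (g.injective_rangeRestrict_iff.2 hg) hf'
  exact fun x y hxy ↦ hinj (Subtype.ext hxy)

end LinearMap

section Semiring

variable {R ι κ μ : Type*} [Fintype ι] [Fintype κ]

theorem mulVec_injective_of_mul_eq_one [Semiring R] [DecidableEq κ] {L : Matrix κ ι R}
    {W : Matrix ι κ R} (h : L * W = 1) : Function.Injective W.mulVec :=
  Function.LeftInverse.injective (g := L.mulVec) fun x ↦ by
    rw [mulVec_mulVec, h, one_mulVec]

theorem mulVec_mul_injective [Semiring R] {B : Matrix μ ι R} {C : Matrix ι κ R}
    (hB : Function.Injective B.mulVec) (hC : Function.Injective C.mulVec) :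
    Function.Injective (B * C).mulVec := by
  simpa only [Function.comp_def, mulVec_mulVec] using hB.comp hC

theorem ker_mulVecLin_mul_of_injective [CommSemiring R] {B : Matrix μ κ R}
    (hB : Function.Injective B.mulVec) (C : Matrix κ ι R) :
    LinearMap.ker (B * C).mulVecLin = LinearMap.ker C.mulVecLin := by
  rw [mulVecLin_mul,
    LinearMap.ker_comp_of_ker_eq_bot _ (LinearMap.ker_eq_bot_of_injective hB)]

end Semiring

section ComplementaryProjection

variable {R ι κ : Type*} [Fintype ι] [Fintype κ] [DecidableEq ι] [DecidableEq κ]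

theorem isIdempotentElem_one_sub_mul [Ring R] {L : Matrix κ ι R} {W : Matrix ι κ R}
    (h : L * W = 1) : IsIdempotentElem (1 - W * L) := by
  refine IsIdempotentElem.one_sub ?_
  rw [IsIdempotentElem, Matrix.mul_assoc, ← Matrix.mul_assoc L, h, Matrix.one_mul]

theorem ker_mulVecLin_one_sub_mul [CommRing R] {L : Matrix κ ι R} {W : Matrix ι κ R}
    (h : L * W = 1) :
    LinearMap.ker (1 - W * L).mulVecLin = LinearMap.range W.mulVecLin := by
  ext x
  simp only [LinearMap.mem_ker, LinearMap.mem_range, mulVecLin_apply, sub_mulVec, one_mulVec,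
    sub_eq_zero, ← mulVec_mulVec]
  constructor
  · exact fun hx ↦ ⟨L *ᵥ x, hx.symm⟩
  · rintro ⟨y, rfl⟩
    rw [mulVec_mulVec y L W, h, one_mulVec]

theorem range_mulVecLin_one_sub_mul [CommRing R] {L : Matrix κ ι R} {W : Matrix ι κ R}
    (h : L * W = 1) :
    LinearMap.range (1 - W * L).mulVecLin = LinearMap.ker L.mulVecLin := by
  ext x
  simp only [LinearMap.mem_ker, LinearMap.mem_range, mulVecLin_apply]
  constructor
  · rintro ⟨y, rfl⟩
    rw [mulVec_mulVec, Matrix.mul_sub, ← Matrix.mul_assoc, h, Matrix.one_mul, Matrix.mul_one,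
      sub_self, zero_mulVec]
  · intro hx
    exact ⟨x, by rw [sub_mulVec, ← mulVec_mulVec, hx, mulVec_zero, one_mulVec, sub_zero]⟩

end ComplementaryProjection

section LowRankUpdate

variable {R ι κ : Type*} [CommRing R] [Fintype ι] [DecidableEq ι] [Fintype κ]
  {A B : Matrix ι ι R} {V : Matrix ι κ R} {K : Matrix κ ι R}

theorem range_inv_mul_le_of_sub_eq_mul (hA : IsUnit A) (hB : IsUnit B) (h : A - B = V * K) :
    LinearMap.range (A⁻¹ * V).mulVecLin ≤ LinearMap.range (B⁻¹ * V).mulVecLin := by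
  classical
  have hBAV : B * (A⁻¹ * V) = V * (1 - K * (A⁻¹ * V)) := by
    rw [← sub_sub_cancel A B, h, Matrix.sub_mul, Matrix.mul_sub, Matrix.mul_one, Matrix.mul_assoc,
      mul_nonsing_inv_cancel_left _ _ ((isUnit_iff_isUnit_det A).1 hA)]
  have hAV : A⁻¹ * V = B⁻¹ * V * (1 - K * (A⁻¹ * V)) := by
    rw [Matrix.mul_assoc, ← hBAV,
      nonsing_inv_mul_cancel_left _ _ ((isUnit_iff_isUnit_det B).1 hB)]
  rw [hAV, mulVecLin_mul]
  exact LinearMap.range_comp_le_range _ _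

theorem range_inv_mul_eq_of_sub_eq_mul (hA : IsUnit A) (hB : IsUnit B) (h : A - B = V * K) :
    LinearMap.range (A⁻¹ * V).mulVecLin = LinearMap.range (B⁻¹ * V).mulVecLin := by
  have h' : B - A = V * -K := by rw [Matrix.mul_neg, ← h, neg_sub]
  exact le_antisymm (range_inv_mul_le_of_sub_eq_mul hA hB h)
    (range_inv_mul_le_of_sub_eq_mul hB hA h')

end LowRankUpdate

section ConjTranspose

variable {R ι κ μ : Type*} [CommSemiring R] [StarRing R] [Fintype ι] [Fintype κ] [Fintype μ]

theorem mem_ker_conjTranspose_iff {B : Matrix ι κ R} {x : ι → R} :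
    x ∈ LinearMap.ker Bᴴ.mulVecLin ↔ ∀ z ∈ LinearMap.range B.mulVecLin, star z ⬝ᵥ x = 0 := by
  simp only [LinearMap.mem_ker, LinearMap.mem_range, mulVecLin_apply, forall_exists_index,
    forall_apply_eq_imp_iff, star_mulVec, ← dotProduct_mulVec]
  rw [← dotProduct_eq_zero_iff, star_involutive.surjective.forall]
  simp only [dotProduct_comm]

theorem ker_conjTranspose_eq_of_range_eq {B : Matrix ι κ R} {C : Matrix ι μ R}
    (h : LinearMap.range B.mulVecLin = LinearMap.range C.mulVecLin) :
    LinearMap.ker Bᴴ.mulVecLin = LinearMap.ker Cᴴ.mulVecLin := by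
  ext x
  rw [mem_ker_conjTranspose_iff, mem_ker_conjTranspose_iff, h]

end ConjTranspose

section WeightedPinv

variable {R ι κ μ : Type*} [CommRing R] [StarRing R] [Fintype ι] [Fintype κ] [Fintype μ]

theorem ker_conjTranspose_mul_eq_ker_conjTranspose [DecidableEq ι] {A : Matrix ι ι R}
    {V : Matrix ι κ R} {W : Matrix ι μ R} (hA : A.IsHermitian) (hAu : IsUnit A)
    (hW : LinearMap.range W.mulVecLin = LinearMap.range (A⁻¹ * V).mulVecLin) :
    LinearMap.ker (Wᴴ * A).mulVecLin = LinearMap.ker Vᴴ.mulVecLin := by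
  have hVA : (A⁻¹ * V)ᴴ * A = Vᴴ := by
    rw [conjTranspose_mul, hA.inv.eq,
      nonsing_inv_mul_cancel_right _ _ ((isUnit_iff_isUnit_det A).1 hAu)]
  rw [← hVA, mulVecLin_mul, mulVecLin_mul, LinearMap.ker_comp, LinearMap.ker_comp,
    ker_conjTranspose_eq_of_range_eq hW]

variable [DecidableEq κ]

/-- The `A`-weighted pseudoinverse of `W`: it sends `x` to the coefficients, with respect to the
columns of `W`, of the `A`-orthogonal projection of `x` onto the range of `W`. It is meaningful
when `Wᴴ * A * W` is invertible. -/
noncomputable def weightedPinv (A : Matrix ι ι R) (W : Matrix ι κ R) : Matrix κ ι R :=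
  (Wᴴ * A * W)⁻¹ * (Wᴴ * A)

theorem weightedPinv_mul_self {A : Matrix ι ι R} {W : Matrix ι κ R} (hS : IsUnit (Wᴴ * A * W)) :
    weightedPinv A W * W = 1 := by
  rw [weightedPinv, Matrix.mul_assoc, nonsing_inv_mul _ ((isUnit_iff_isUnit_det _).1 hS)]

theorem ker_weightedPinv {A : Matrix ι ι R} {W : Matrix ι κ R} (hS : IsUnit (Wᴴ * A * W)) :
    LinearMap.ker (weightedPinv A W).mulVecLin = LinearMap.ker (Wᴴ * A).mulVecLin :=
  ker_mulVecLin_mul_of_injective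
    (mulVec_injective_of_mul_eq_one (mul_nonsing_inv _ ((isUnit_iff_isUnit_det _).1 hS))) _

theorem isHermitian_mul_mul_weightedPinv {A : Matrix ι ι R} (hA : A.IsHermitian)
    (W : Matrix ι κ R) : (A * (W * weightedPinv A W)).IsHermitian := by
  have hWA : (Wᴴ * A)ᴴ = A * W := by
    rw [conjTranspose_mul, conjTranspose_conjTranspose, hA.eq]
  have hSinv : (Wᴴ * A * W)⁻¹.IsHermitian := (isHermitian_conjTranspose_mul_mul W hA).inv
  rw [weightedPinv, ← Matrix.mul_assoc, ← hWA, ← Matrix.mul_assoc]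
  exact isHermitian_conjTranspose_mul_mul (Wᴴ * A) hSinv

theorem conjTranspose_one_sub_mul_weightedPinv_mul [DecidableEq ι] {A : Matrix ι ι R}
    (hA : A.IsHermitian) (W : Matrix ι κ R) :
    (1 - W * weightedPinv A W)ᴴ * A = A * (1 - W * weightedPinv A W) := by
  have hAP : (A * (1 - W * weightedPinv A W)).IsHermitian := by
    rw [Matrix.mul_sub, Matrix.mul_one]
    exact hA.sub (isHermitian_mul_mul_weightedPinv hA W)
  rw [← hAP.eq, conjTranspose_mul, hA.eq]

end WeightedPinv

theorem stmt10_general {𝕜 ι κ : Type*} [Field 𝕜] [PartialOrder 𝕜] [StarRing 𝕜]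
    [Fintype ι] [DecidableEq ι] [Fintype κ] [DecidableEq κ]
    {Aplus : Matrix ι ι 𝕜} (hAplus : IsUnit Aplus) {D : Matrix κ κ 𝕜} (hD : IsUnit D)
    {V : Matrix ι κ 𝕜} (hV : Function.Injective V.mulVec)
    {Aminus : Matrix ι ι 𝕜} (hAminus : Aminus = V * D * Vᴴ)
    {A : Matrix ι ι 𝕜} (hA : A = Aplus - Aminus) (hApos : A.PosDef) {W : Matrix ι κ 𝕜}
    (hW : LinearMap.range W.mulVecLin = LinearMap.range (Aplus⁻¹ * V).mulVecLin)
    {P : Matrix ι ι 𝕜} (hP : P = 1 - W * (Wᴴ * A * W)⁻¹ * Wᴴ * A) :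
    IsUnit (Wᴴ * A * W) ∧
      P * P = P ∧
      Pᴴ * A = A * P ∧
      LinearMap.ker P.mulVecLin = LinearMap.range (A⁻¹ * V).mulVecLin ∧
      LinearMap.range P.mulVecLin = LinearMap.ker Aminus.mulVecLin := by
  have hWA : LinearMap.range W.mulVecLin = LinearMap.range (A⁻¹ * V).mulVecLin := by
    refine hW.trans (range_inv_mul_eq_of_sub_eq_mul hAplus hApos.isUnit (K := D * Vᴴ) ?_)
    rw [hA, hAminus, sub_sub_cancel, Matrix.mul_assoc]
  have hAV : Function.Injective (A⁻¹ * V).mulVec :=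
    mulVec_mul_injective (mulVec_injective_of_isUnit hApos.inv.isUnit) hV
  have hS : IsUnit (Wᴴ * A * W) :=
    (hApos.conjTranspose_mul_mul_same (injective_of_range_eq_range hWA hAV)).isUnit
  have hVD : Function.Injective (V * D).mulVec :=
    mulVec_mul_injective hV (mulVec_injective_of_isUnit hD)
  have hPW : P = 1 - W * weightedPinv A W := by
    simp only [hP, weightedPinv, Matrix.mul_assoc]
  have hLW : weightedPinv A W * W = 1 := weightedPinv_mul_self hS
  subst hPW
  refine ⟨hS, isIdempotentElem_one_sub_mul hLW,
    conjTranspose_one_sub_mul_weightedPinv_mul hApos.isHermitian W,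
    (ker_mulVecLin_one_sub_mul hLW).trans hWA, ?_⟩
  rw [range_mulVecLin_one_sub_mul hLW, ker_weightedPinv hS,
    ker_conjTranspose_mul_eq_ker_conjTranspose hApos.isHermitian hApos.isUnit hWA, hAminus,
    ker_mulVecLin_mul_of_injective hVD]

theorem stmt10 {n nm : ℕ} (hn : 0 < n) (hnm : 0 < nm) (hle : nm ≤ n)
    (Aplus : Matrix (Fin n) (Fin n) ℝ) (hAplus : Aplus.PosDef)
    (d : Fin nm → ℝ) (hd : ∀ k, 0 < d k)
    (V : Matrix (Fin n) (Fin nm) ℝ) (hVortho : Vᵀ * V = 1)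
    (Aminus : Matrix (Fin n) (Fin n) ℝ)
    (hAminus : Aminus = V * Matrix.diagonal d * Vᵀ)
    (A : Matrix (Fin n) (Fin n) ℝ)
    (hA : A = Aplus - Aminus)
    (hApos : A.PosDef)
    (W : Matrix (Fin n) (Fin nm) ℝ)
    (hW : LinearMap.range W.mulVecLin = LinearMap.range (Aplus⁻¹ * V).mulVecLin)
    (P3 : Matrix (Fin n) (Fin n) ℝ)
    (hP3 : P3 = 1 - W * (Wᵀ * A * W)⁻¹ * Wᵀ * A) :
    IsUnit (Wᵀ * A * W) ∧
      P3 * P3 = P3 ∧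
      P3ᵀ * A = A * P3 ∧
      LinearMap.ker P3.mulVecLin = LinearMap.range (A⁻¹ * V).mulVecLin ∧
      LinearMap.range P3.mulVecLin = LinearMap.ker Aminus.mulVecLin := by
  simp only [← conjTranspose_eq_transpose_of_trivial] at hAminus hP3 ⊢
  have hD : IsUnit (diagonal d) :=
    isUnit_diagonal.2 (Pi.isUnit_iff.2 fun k ↦ (hd k).ne'.isUnit)
  exact stmt10_general hAplus.isUnit hD (mulVec_injective_of_mul_eq_one hVortho)
    hAminus hA hApos hW hP3
end

section
/- Let A_+ ∈ ℝ^{n×n} be symmetric positive definite, let Λ_- ∈ ℝ^{n_-×n_-} be diagonal positive definite, let V_- ∈ ℝ^{n×n_-} have orthonormal columns, and suppose A := A_+ − V_- Λ_- (V_-)^T is symmetric positive definite. Let W ∈ ℝ^{n×n_-} satisfy range(W) = range(A_+^{-1} V_-), and define Π_3 := I − W (W^T A W)^{-1} W^T A. Let H_2 ∈ ℝ^{n×n} be symmetric positive definite and let 0 < λ_min ≤ λ_max be such that every eigenvalue of H_2 A_+ lies in [λ_min, λ_max]. Then every nonzero eigenvalue λ of H_2 A Π_3 satisfies λ_min ≤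 λ ≤ λ_max. -/
open Matrix

/-!
Write `P = Π₃` and `A = A₊ - V C Vᴴ`. Then `Vᴴ A⁻¹ = (1 + Vᴴ A⁻¹ V C) Vᴴ A₊⁻¹`, so a vector whose
image under `A` is orthogonal to `range (A₊⁻¹ V) = range W` is itself orthogonal to `range V`.
Hence `Wᴴ A P = 0` gives `Vᴴ P = 0`: on the range of `P` the matrices `A` and `A₊` agree, and `P` is
the `A₊`-orthogonal projection along `range (A₊⁻¹ V)`. So if `H₂ A P x = H₂ A₊ P x = μ x` with
`μ ≠ 0`, then `μ` is the Rayleigh quotient of `H₂ A₊` at `P x` in the `A₊`-inner product, in which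
`H₂ A₊` is self-adjoint.
-/

section LoewnerBounds

variable {𝒜 : Type*} [Ring 𝒜] [StarRing 𝒜] [TopologicalSpace 𝒜] [IsSemitopologicalRing 𝒜]
  [T2Space 𝒜] [PartialOrder 𝒜] [StarOrderedRing 𝒜] [Algebra ℝ 𝒜]
  [ContinuousFunctionalCalculus ℝ 𝒜 IsSelfAdjoint] [NonnegSpectrumClass ℝ 𝒜]

theorem smul_le_mul_mul_self_le_smul_of_spectrum_subset_Icc {p h : 𝒜} (hp : IsStrictlyPositive p)
    (hh : IsSelfAdjoint h) {a b : ℝ} (hspec : spectrum ℝ (h * p) ⊆ Set.Icc a b) :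
    a • p ≤ p * h * p ∧ p * h * p ≤ b • p := by
  obtain ⟨_, ⟨u, rfl⟩, rfl⟩ := CStarAlgebra.isStrictlyPositive_iff_eq_star_mul_self.mp hp
  have spectrum_conj : spectrum ℝ (u * h * star (u : 𝒜)) ⊆ Set.Icc a b := by
    have conj_eq : u * h * star (u : 𝒜) = u * (h * (star (u : 𝒜) * u)) * (u⁻¹ : 𝒜ˣ) := by
      simp [mul_assoc]
    rwa [conj_eq, spectrum.units_conjugate]
  have selfAdjoint_conj : IsSelfAdjoint (u * h * star (u : 𝒜)) := hh.conjugate _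
  have lower := star_left_conjugate_le_conjugate
    (algebraMap_le_of_le_spectrum fun x hx ↦ (spectrum_conj hx).1) (u : 𝒜)
  have upper := star_left_conjugate_le_conjugate
    (le_algebraMap_of_spectrum_le fun x hx ↦ (spectrum_conj hx).2) (u : 𝒜)
  simp only [Algebra.algebraMap_eq_smul_one, mul_smul_comm, smul_mul_assoc, mul_one, mul_assoc]
    at lower upper ⊢
  exact ⟨lower, upper⟩

end LoewnerBounds

section MulVec

variable {m n k l R K : Type*} [Fintype n] [Fintype k] [Fintype l]

theorem exists_mulVec_eq_smul_of_mem_spectrum [DecidableEq n] [CommSemiring R] [Field K]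
    [Algebra R K] {M : Matrix n n K} {r : R} (hr : r ∈ spectrum R M) :
    ∃ x : n → K, x ≠ 0 ∧ M *ᵥ x = r • x := by
  rw [spectrum.mem_iff, isUnit_iff_isUnit_det, isUnit_iff_ne_zero, not_not,
    ← exists_mulVec_eq_zero_iff] at hr
  obtain ⟨x, hx, hMx⟩ := hr
  refine ⟨x, hx, ?_⟩
  rw [sub_mulVec, sub_eq_zero, Algebra.algebraMap_eq_smul_one, smul_mulVec, one_mulVec] at hMx
  exact hMx.symm

theorem exists_eq_mul_of_range_mulVecLin_le [CommSemiring R] {M : Matrix m k R} {N : Matrix m l R}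
    (h : LinearMap.range M.mulVecLin ≤ LinearMap.range N.mulVecLin) :
    ∃ X : Matrix l k R, M = N * X := by
  classical
  choose c hc using fun j ↦ h ⟨Pi.single j 1, rfl⟩
  refine ⟨(of c)ᵀ, ext fun i j ↦ ?_⟩
  have hcol : N *ᵥ c j = M.col j := by simpa using hc j
  exact (congr_fun hcol i).symm

theorem mulVec_injective_of_mul_eq_one_s12 [DecidableEq n] [Fintype m] [Semiring R]
    {U : Matrix n m R} {V : Matrix m n R} (h : U * V = 1) : Function.Injective V.mulVec :=
  Function.LeftInverse.injective (g := U.mulVec) fun x ↦ by rw [mulVec_mulVec, h, one_mulVec]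

theorem mulVec_injective_iff_of_range_mulVecLin_eq [Field K] {M N : Matrix m n K}
    (h : LinearMap.range M.mulVecLin = LinearMap.range N.mulVecLin) :
    Function.Injective M.mulVec ↔ Function.Injective N.mulVec := by
  rw [mulVec_injective_iff, mulVec_injective_iff, linearIndependent_iff_card_eq_finrank_span,
    linearIndependent_iff_card_eq_finrank_span, Set.finrank, Set.finrank, ← range_mulVecLin,
    ← range_mulVecLin, h]

theorem star_mulVec_dotProduct_mulVec_mulVec [CommSemiring R] [StarRing R] [Fintype m]
    (B : Matrix m n R) (M : Matrix m m R) (x : n → R) :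
    star (B *ᵥ x) ⬝ᵥ M *ᵥ (B *ᵥ x) = star x ⬝ᵥ (Bᴴ * M * B) *ᵥ x := by
  rw [star_mulVec, ← dotProduct_mulVec, mulVec_mulVec, mulVec_mulVec, Matrix.mul_assoc]

end MulVec

section Deflation

variable {n m k R : Type*} [Fintype n] [DecidableEq n] [Fintype m] [Fintype k] [DecidableEq k]
  [CommRing R]

theorem mul_inv_of_eq_sub_mul [DecidableEq m] {Aplus A : Matrix n n R} {V : Matrix n m R}
    {U : Matrix m n R} (hA : A = Aplus - V * U) (hunit : IsUnit A ↔ IsUnit Aplus) :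
    U * A⁻¹ = (1 + U * A⁻¹ * V) * (U * Aplus⁻¹) := by
  have resolvent : A⁻¹ = Aplus⁻¹ + A⁻¹ * (V * U) * Aplus⁻¹ := by
    rw [← sub_eq_iff_eq_add', inv_sub_inv hunit, hA, sub_sub_cancel]
  nth_rw 1 [resolvent]
  simp only [Matrix.mul_add, Matrix.add_mul, Matrix.one_mul, Matrix.mul_assoc]

variable [StarRing R]

/-- The deflation projector `Π = I - W (Wᴴ A W)⁻¹ Wᴴ A`, which removes `range W` from the problem
with matrix `A`. It equals `1` when `Wᴴ A W` is singular, because the inverse is then `0`. -/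
noncomputable def deflation (A : Matrix n n R) (W : Matrix n k R) : Matrix n n R :=
  1 - W * (Wᴴ * A * W)⁻¹ * Wᴴ * A

theorem conjTranspose_mul_mul_deflation {A : Matrix n n R} {W : Matrix n k R}
    (hW : IsUnit (Wᴴ * A * W)) : Wᴴ * A * deflation A W = 0 := by
  have cancel := mul_nonsing_inv (Wᴴ * A * W) ((isUnit_iff_isUnit_det _).mp hW)
  calc Wᴴ * A * deflation A W
      = Wᴴ * A - Wᴴ * A * W * (Wᴴ * A * W)⁻¹ * (Wᴴ * A) := by
        simp only [deflation, Matrix.mul_sub, Matrix.mul_one, Matrix.mul_assoc]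
    _ = 0 := by rw [cancel, Matrix.one_mul, sub_self]

variable {Aplus A : Matrix n n R} {V : Matrix n m R} {C : Matrix m m R} {W : Matrix n k R}

theorem conjTranspose_mul_deflation (hA : A = Aplus - V * C * Vᴴ) (hAplus : Aplus.IsHermitian)
    (hAplus_unit : IsUnit Aplus) (hA_unit : IsUnit A) (hWAW : IsUnit (Wᴴ * A * W))
    (hW : LinearMap.range (Aplus⁻¹ * V).mulVecLin ≤ LinearMap.range W.mulVecLin) :
    Vᴴ * deflation A W = 0 := by
  classical
  obtain ⟨X, hX⟩ := exists_eq_mul_of_range_mulVecLin_le hW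
  have hV : Vᴴ * Aplus⁻¹ = Xᴴ * Wᴴ := by
    rw [← conjTranspose_mul, ← hX, conjTranspose_mul, hAplus.inv.eq]
  have hVA : Vᴴ * A⁻¹ = (1 + Vᴴ * A⁻¹ * (V * C)) * (Xᴴ * Wᴴ) := by
    rw [← hV]
    exact mul_inv_of_eq_sub_mul hA (iff_of_true hA_unit hAplus_unit)
  calc Vᴴ * deflation A W
      = Vᴴ * A⁻¹ * A * deflation A W := by
        rw [nonsing_inv_mul_cancel_right _ _ ((isUnit_iff_isUnit_det _).mp hA_unit)]
    _ = (1 + Vᴴ * A⁻¹ * (V * C)) * (Xᴴ * Wᴴ) * A * deflation A W := by rw [← hVA]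
    _ = (1 + Vᴴ * A⁻¹ * (V * C)) * Xᴴ * (Wᴴ * A * deflation A W) := by
        simp only [Matrix.mul_assoc]
    _ = 0 := by rw [conjTranspose_mul_mul_deflation hWAW, Matrix.mul_zero]

theorem conjTranspose_deflation_mul_mul_deflation (hAplus_unit : IsUnit Aplus)
    (hW : LinearMap.range W.mulVecLin ≤ LinearMap.range (Aplus⁻¹ * V).mulVecLin)
    (hV : Vᴴ * deflation A W = 0) :
    (deflation A W)ᴴ * Aplus * deflation A W = (deflation A W)ᴴ * Aplus := by
  obtain ⟨X, hX⟩ := exists_eq_mul_of_range_mulVecLin_le hW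
  have hV' : (deflation A W)ᴴ * V = 0 := by
    simpa only [conjTranspose_mul, conjTranspose_conjTranspose, conjTranspose_zero] using
      congr_arg conjTranspose hV
  have hAW : Aplus * W = V * X := by
    rw [hX, Matrix.mul_assoc,
      mul_nonsing_inv_cancel_left _ _ ((isUnit_iff_isUnit_det _).mp hAplus_unit)]
  have hPW : (deflation A W)ᴴ * Aplus * W = 0 := by
    rw [Matrix.mul_assoc, hAW, ← Matrix.mul_assoc, hV', Matrix.zero_mul]
  calc (deflation A W)ᴴ * Aplus * deflation A W
      = (deflation A W)ᴴ * Aplus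
          - (deflation A W)ᴴ * Aplus * W * ((Wᴴ * A * W)⁻¹ * Wᴴ * A) := by
        rw [deflation]; simp only [Matrix.mul_sub, Matrix.mul_one, Matrix.mul_assoc]
    _ = (deflation A W)ᴴ * Aplus := by rw [hPW, Matrix.zero_mul, sub_zero]

end Deflation

section Eigenvalues

open scoped ComplexOrder MatrixOrder

variable {n m k 𝕜 : Type*} [Fintype n] [Fintype m] [Fintype k] [DecidableEq k] [RCLike 𝕜]

theorem isUnit_conjTranspose_mul_mul_of_range_eq {A : Matrix n n 𝕜} (hA : A.PosDef)
    {M W : Matrix n k 𝕜} (hM : Function.Injective M.mulVec)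
    (hW : LinearMap.range W.mulVecLin = LinearMap.range M.mulVecLin) : IsUnit (Wᴴ * A * W) :=
  (hA.conjTranspose_mul_mul_same
    ((mulVec_injective_iff_of_range_mulVecLin_eq hW).mpr hM)).isUnit

variable [DecidableEq n]

theorem eigenvalue_mem_Icc_of_orthogonal_projection {A H P : Matrix n n 𝕜} (hA : A.PosDef)
    (hH : H.IsHermitian) (hP : Pᴴ * A * P = Pᴴ * A) {a b : ℝ}
    (hspec : spectrum ℝ (H * A) ⊆ Set.Icc a b) {μ : 𝕜} (hμ : μ ≠ 0) {x : n → 𝕜} (hx : x ≠ 0)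
    (hμx : (H * A * P) *ᵥ x = μ • x) : μ ∈ Set.Icc (a : 𝕜) b := by
  set y := P *ᵥ x with y_def
  have y_ne_zero : y ≠ 0 := by
    intro hy
    rw [← mulVec_mulVec, ← y_def, hy, mulVec_zero] at hμx
    exact smul_ne_zero hμ hx hμx.symm
  have energy_pos : 0 < star y ⬝ᵥ A *ᵥ y := hA.dotProduct_mulVec_pos y_ne_zero
  have rayleigh : star y ⬝ᵥ (A * H * A) *ᵥ y = μ * (star y ⬝ᵥ A *ᵥ y) := calc
    star y ⬝ᵥ (A * H * A) *ᵥ y = star x ⬝ᵥ (Pᴴ * A) *ᵥ ((H * A * P) *ᵥ x) := by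
      rw [y_def, star_mulVec_dotProduct_mulVec_mulVec, mulVec_mulVec]
      simp only [Matrix.mul_assoc]
    _ = μ * (star x ⬝ᵥ (Pᴴ * A * P) *ᵥ x) := by
      rw [hμx, mulVec_smul, dotProduct_smul, smul_eq_mul, hP]
    _ = μ * (star y ⬝ᵥ A *ᵥ y) := by rw [y_def, star_mulVec_dotProduct_mulVec_mulVec]
  obtain ⟨lower, upper⟩ :=
    smul_le_mul_mul_self_le_smul_of_spectrum_subset_Icc hA.isStrictlyPositive hH hspec
  have lower_y := (le_iff.mp lower).dotProduct_mulVec_nonneg y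
  have upper_y := (le_iff.mp upper).dotProduct_mulVec_nonneg y
  rw [sub_mulVec, dotProduct_sub, sub_nonneg, smul_mulVec, dotProduct_smul, rayleigh,
    RCLike.real_smul_eq_coe_mul] at lower_y upper_y
  exact ⟨le_of_mul_le_mul_right lower_y energy_pos, le_of_mul_le_mul_right upper_y energy_pos⟩

theorem stmt12_general {Aplus A H : Matrix n n 𝕜} {V : Matrix n m 𝕜} {C : Matrix m m 𝕜}
    {W : Matrix n k 𝕜} (hA : A = Aplus - V * C * Vᴴ) (hAplus : Aplus.PosDef) (hA_unit : IsUnit A)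
    (hWAW : IsUnit (Wᴴ * A * W))
    (hW : LinearMap.range W.mulVecLin = LinearMap.range (Aplus⁻¹ * V).mulVecLin)
    (hH : H.IsHermitian) {a b : ℝ}
    (hspec : ∀ (μ : ℝ) (x : n → 𝕜), x ≠ 0 → (H * Aplus) *ᵥ x = μ • x → a ≤ μ ∧ μ ≤ b)
    (μ : 𝕜) (x : n → 𝕜) (hx : x ≠ 0) (hμx : (H * A * deflation A W) *ᵥ x = μ • x)
    (hμ : μ ≠ 0) : (a : 𝕜) ≤ μ ∧ μ ≤ b := by
  have hVP : Vᴴ * deflation A W = 0 :=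
    conjTranspose_mul_deflation hA hAplus.isHermitian hAplus.isUnit hA_unit hWAW hW.ge
  have hAP : A * deflation A W = Aplus * deflation A W := by
    nth_rw 1 [hA]
    rw [Matrix.sub_mul, Matrix.mul_assoc _ Vᴴ, hVP, Matrix.mul_zero, sub_zero]
  have hspec' : spectrum ℝ (H * Aplus) ⊆ Set.Icc a b := fun r hr ↦
    let ⟨x, hx, hrx⟩ := exists_mulVec_eq_smul_of_mem_spectrum hr
    hspec r x hx hrx
  refine eigenvalue_mem_Icc_of_orthogonal_projection hAplus hH
    (conjTranspose_deflation_mul_mul_deflation hAplus.isUnit hW.le hVP) hspec' hμ hx ?_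
  rwa [Matrix.mul_assoc, ← hAP, ← Matrix.mul_assoc]

end Eigenvalues

theorem stmt12 {n nm : ℕ} (hn : 0 < n) (hnm : 0 < nm) (hle : nm ≤ n)
    (Aplus : Matrix (Fin n) (Fin n) ℝ) (hAplus : Aplus.PosDef)
    (d : Fin nm → ℝ) (hd : ∀ k, 0 < d k)
    (V : Matrix (Fin n) (Fin nm) ℝ) (hVortho : Vᵀ * V = 1)
    (A : Matrix (Fin n) (Fin n) ℝ)
    (hA : A = Aplus - V * Matrix.diagonal d * Vᵀ)
    (hApos : A.PosDef)
    (W : Matrix (Fin n) (Fin nm) ℝ)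
    (hW : LinearMap.range W.mulVecLin = LinearMap.range (Aplus⁻¹ * V).mulVecLin)
    (P3 : Matrix (Fin n) (Fin n) ℝ)
    (hP3 : P3 = 1 - W * (Wᵀ * A * W)⁻¹ * Wᵀ * A)
    (H2 : Matrix (Fin n) (Fin n) ℝ) (hH2 : H2.PosDef)
    (lmin lmax : ℝ) (hlmin : 0 < lmin) (hlml : lmin ≤ lmax)
    (hspec : ∀ (lam : ℝ) (x : Fin n → ℝ), x ≠ 0 →
      (H2 * Aplus) *ᵥ x = lam • x → lmin ≤ lam ∧ lam ≤ lmax) :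
    ∀ (lam : ℝ) (x : Fin n → ℝ), x ≠ 0 → (H2 * A * P3) *ᵥ x = lam • x → lam ≠ 0 →
      lmin ≤ lam ∧ lam ≤ lmax := by
  have hinj : Function.Injective (Aplus⁻¹ * V).mulVec :=
    mulVec_injective_of_mul_eq_one_s12 (U := Vᵀ * Aplus) <| by
      rw [Matrix.mul_assoc, mul_nonsing_inv_cancel_left _ _
        ((isUnit_iff_isUnit_det _).mp hAplus.isUnit), hVortho]
  subst hP3
  exact stmt12_general hA hAplus hApos.isUnit
    (isUnit_conjTranspose_mul_mul_of_range_eq hApos hinj hW) hW hH2.isHermitian hspec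
end

section
/- Let A ∈ ℝ^{n×n} be symmetric positive definite and let W ∈ ℝ^{n×m} have full column rank. Then W^T A W is invertible and for all x ∈ ℝ^n, ⟨x, W (W^T A W)^{-1} W^T x⟩ ≤ ⟨x, A^{-1} x⟩; equivalently, ⟨x, A W (W^T A W)^{-1} W^T A x⟩ ≤ ⟨x, A x⟩ for all x ∈ ℝ^n. -/
/-!
`π = W (Wᴴ A W)⁻¹ Wᴴ A` is the projection onto the range of `W` that is orthogonal for the inner
product induced by `A`. By Pythagoras `A - A π = (1 - π)ᴴ A (1 - π)`, which is positive
semidefinite. Conjugating by `A⁻¹` turns this into the inequality between `A⁻¹` and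
`W (Wᴴ A W)⁻¹ Wᴴ`.
-/

open Matrix

section RankInjective

variable {K m n : Type*} [Field K] [Fintype m]

theorem mulVec_injective_iff_rank_eq_card {W : Matrix n m K} :
    Function.Injective W.mulVec ↔ W.rank = Fintype.card m := by
  rw [mulVec_injective_iff, linearIndependent_iff_card_eq_finrank_span, Set.finrank,
    ← rank_eq_finrank_span_cols, eq_comm]

end RankInjective

section GalerkinProjection

variable {R m n : Type*} [CommRing R] [StarRing R] [Fintype m] [DecidableEq m] [Fintype n]

/-- The Galerkin projection onto the range of `W`, orthogonal for the form `star x ⬝ᵥ A *ᵥ y`.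
If the Gram matrix `Wᴴ * A * W` is not invertible, its inverse, and so the whole product, is `0` by
convention. -/
noncomputable def galerkinProjection (A : Matrix n n R) (W : Matrix n m R) : Matrix n n R :=
  W * (Wᴴ * A * W)⁻¹ * Wᴴ * A

variable {A : Matrix n n R} {W : Matrix n m R}

theorem conjTranspose_galerkinProjection_mul (hA : A.IsHermitian) :
    (galerkinProjection A W)ᴴ * A = A * galerkinProjection A W := by
  have hG : (Wᴴ * A * W)⁻¹.IsHermitian := (isHermitian_conjTranspose_mul_mul W hA).inv
  have hadj : (galerkinProjection A W)ᴴ = A * (W * (Wᴴ * A * W)⁻¹ * Wᴴ) := by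
    rw [galerkinProjection, conjTranspose_mul, hA.eq,
      (isHermitian_mul_mul_conjTranspose W hG).eq]
  rw [hadj, galerkinProjection, Matrix.mul_assoc]

theorem isIdempotentElem_galerkinProjection (hG : IsUnit (Wᴴ * A * W)) :
    IsIdempotentElem (galerkinProjection A W) :=
  calc galerkinProjection A W * galerkinProjection A W
      = W * ((Wᴴ * A * W)⁻¹ * (Wᴴ * A * W)) * (Wᴴ * A * W)⁻¹ * Wᴴ * A := by
        simp only [galerkinProjection, Matrix.mul_assoc]
    _ = galerkinProjection A W := by
        rw [nonsing_inv_mul _ ((isUnit_iff_isUnit_det _).mp hG), Matrix.mul_one, galerkinProjection]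

theorem conjTranspose_mul_mul_one_sub_galerkinProjection [DecidableEq n] (hA : A.IsHermitian)
    (hG : IsUnit (Wᴴ * A * W)) :
    (1 - galerkinProjection A W)ᴴ * A * (1 - galerkinProjection A W) =
      A - A * galerkinProjection A W :=
  calc (1 - galerkinProjection A W)ᴴ * A * (1 - galerkinProjection A W)
      = A * ((1 - galerkinProjection A W) * (1 - galerkinProjection A W)) := by
        rw [conjTranspose_sub, conjTranspose_one, Matrix.sub_mul, Matrix.one_mul,
          conjTranspose_galerkinProjection_mul hA, ← Matrix.mul_assoc, Matrix.mul_sub A,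
          Matrix.mul_one]
    _ = A - A * galerkinProjection A W := by
        rw [(isIdempotentElem_galerkinProjection hG).one_sub.eq, Matrix.mul_sub, Matrix.mul_one]

variable [PartialOrder R]

theorem posSemidef_sub_mul_galerkinProjection (hA : A.PosSemidef) (hG : IsUnit (Wᴴ * A * W)) :
    (A - A * galerkinProjection A W).PosSemidef := by
  classical
  rw [← conjTranspose_mul_mul_one_sub_galerkinProjection hA.isHermitian hG]
  exact hA.conjTranspose_mul_mul_same _

theorem posSemidef_inv_sub_mul_inv_mul_conjTranspose [DecidableEq n] (hA : A.PosSemidef)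
    (hAu : IsUnit A) (hG : IsUnit (Wᴴ * A * W)) :
    (A⁻¹ - W * (Wᴴ * A * W)⁻¹ * Wᴴ).PosSemidef := by
  have hdet : IsUnit A.det := (isUnit_iff_isUnit_det A).mp hAu
  have hconj : (A⁻¹)ᴴ * (A - A * galerkinProjection A W) * A⁻¹ =
      A⁻¹ - W * (Wᴴ * A * W)⁻¹ * Wᴴ := by
    rw [hA.isHermitian.inv.eq, Matrix.mul_sub, nonsing_inv_mul_cancel_left _ _ hdet,
      nonsing_inv_mul _ hdet, Matrix.sub_mul, Matrix.one_mul, galerkinProjection,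
      mul_nonsing_inv_cancel_right _ _ hdet]
  exact hconj ▸ (posSemidef_sub_mul_galerkinProjection hA hG).conjTranspose_mul_mul_same A⁻¹

end GalerkinProjection

section QuadraticForm

variable {R n : Type*} [Ring R] [PartialOrder R] [StarRing R] [IsOrderedAddMonoid R] [Fintype n]

theorem dotProduct_mulVec_le_of_posSemidef_sub {M N : Matrix n n R} (h : (N - M).PosSemidef)
    (x : n → R) : star x ⬝ᵥ (M *ᵥ x) ≤ star x ⬝ᵥ (N *ᵥ x) := by
  rw [← sub_nonneg, ← dotProduct_sub, ← sub_mulVec]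
  exact h.dotProduct_mulVec_nonneg x

end QuadraticForm

theorem stmt19_general {K m n : Type*} [Field K] [PartialOrder K] [StarRing K]
    [IsOrderedAddMonoid K] [Fintype m] [DecidableEq m] [Fintype n] [DecidableEq n]
    {A : Matrix n n K} (hA : A.PosDef) {W : Matrix n m K} (hW : W.rank = Fintype.card m) :
    IsUnit (Wᴴ * A * W) ∧
      (∀ x : n → K,
        star x ⬝ᵥ ((W * (Wᴴ * A * W)⁻¹ * Wᴴ) *ᵥ x) ≤ star x ⬝ᵥ (A⁻¹ *ᵥ x)) ∧
      (∀ x : n → K,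
        star x ⬝ᵥ ((A * W * (Wᴴ * A * W)⁻¹ * Wᴴ * A) *ᵥ x) ≤ star x ⬝ᵥ (A *ᵥ x)) := by
  have hG : IsUnit (Wᴴ * A * W) :=
    (hA.conjTranspose_mul_mul_same (mulVec_injective_iff_rank_eq_card.mpr hW)).isUnit
  have hAπ : A * W * (Wᴴ * A * W)⁻¹ * Wᴴ * A = A * galerkinProjection A W := by
    simp only [galerkinProjection, Matrix.mul_assoc]
  refine ⟨hG, dotProduct_mulVec_le_of_posSemidef_sub ?_, dotProduct_mulVec_le_of_posSemidef_sub ?_⟩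
  · exact posSemidef_inv_sub_mul_inv_mul_conjTranspose hA.posSemidef hA.isUnit hG
  · exact hAπ ▸ posSemidef_sub_mul_galerkinProjection hA.posSemidef hG

theorem stmt19 {n m : ℕ} (hm : 0 < m) (hle : m ≤ n)
    (A : Matrix (Fin n) (Fin n) ℝ) (hA : A.PosDef)
    (W : Matrix (Fin n) (Fin m) ℝ) (hW : W.rank = m) :
    IsUnit (Wᵀ * A * W) ∧
      (∀ x : Fin n → ℝ,
        x ⬝ᵥ ((W * (Wᵀ * A * W)⁻¹ * Wᵀ) *ᵥ x) ≤ x ⬝ᵥ (A⁻¹ *ᵥ x)) ∧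
      (∀ x : Fin n → ℝ,
        x ⬝ᵥ ((A * W * (Wᵀ * A * W)⁻¹ * Wᵀ * A) *ᵥ x) ≤ x ⬝ᵥ (A *ᵥ x)) := by
  simpa only [conjTranspose_eq_transpose_of_trivial, star_trivial] using
    stmt19_general hA (hW.trans (Fintype.card_fin m).symm)
end
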